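/- Dissipativity estimate for the operator J (the inequality established in the proof of Lemma 1). Let S* = (X*,Λ*,Z*) be an equilibrium point. Then for every triple S = (X,Λ,Z) with x_i ∈ Ω_i for all i, ⟨S - S*, J(S)⟩ ≤ -∑_{i=1}^n ⟨x_i - x*_i, ∇f_i(x_i) - ∇f_i(x*_i)⟩ - ∑_{i=1}^n ∑_{j=1}^n L̄_{ij} ⟨λ_i - λ*_i, λ_j - λ*_j⟩. -/

import Mathlib

open scoped BigOperators RealInnerProductSpace

/-!
Apart from the gradients, `J` is affine, and its linear part is skew-symmetric up to the damping
term `-L̄ Λ`. Hence, for any two triples, `⟪S - T, J S - J T⟫` retains only the gradient differences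
and the quadratic form of `L̄`. At an equilibrium `S*` the last two blocks of `J S*` vanish and the
first one lies in the normal cone of the product of the `Ωᵢ` at `X*`, so `⟪S - S*, J S*⟫ ≤ 0`.
Adding the two relations gives the estimate.
-/

section KroneckerId

variable {ι 𝕜 E : Type*} [Fintype ι] [RCLike 𝕜] [NormedAddCommGroup E] [InnerProductSpace 𝕜 E]

/-- The operator `A ⊗ I` on `Eⁿ`, acting by a scalar matrix on vectors whose entries lie in `E`.
The entries are assembled in `PiLp 2`, so that `Eⁿ` carries the inner product `∑ᵢ ⟪uᵢ, vᵢ⟫`. -/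
def kroneckerId (A : Matrix ι ι 𝕜) :
    PiLp 2 (fun _ : ι => E) →ₗ[𝕜] PiLp 2 (fun _ : ι => E) where
  toFun v := WithLp.toLp 2 fun i => ∑ j, A i j • v j
  map_add' u v := by
    ext i
    simp [Finset.sum_add_distrib]
  map_smul' c v := by
    ext i
    simp [Finset.smul_sum, smul_comm c]

@[simp]
theorem kroneckerId_apply (A : Matrix ι ι 𝕜) (v : PiLp 2 (fun _ : ι => E)) (i : ι) :
    kroneckerId A v i = ∑ j, A i j • v j := rfl

theorem inner_kroneckerId_right (A : Matrix ι ι 𝕜) (u v : PiLp 2 (fun _ : ι => E)) :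
    inner 𝕜 u (kroneckerId A v) = ∑ i, ∑ j, A i j * inner 𝕜 (u i) (v j) := by
  simp only [PiLp.inner_apply, kroneckerId_apply, inner_sum, inner_smul_right]

theorem isSymmetric_kroneckerId {A : Matrix ι ι 𝕜} (hA : A.IsHermitian) :
    (kroneckerId A : PiLp 2 (fun _ : ι => E) →ₗ[𝕜] _).IsSymmetric := by
  intro u v
  rw [inner_kroneckerId_right, Finset.sum_comm]
  simp only [PiLp.inner_apply, kroneckerId_apply, sum_inner, inner_smul_left,
    starRingEnd_apply, hA.apply]

end KroneckerId

section SaddleOperator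

variable {H : Type*} [NormedAddCommGroup H] [InnerProductSpace ℝ H]

/-- The operator `J` on triples `(x, λ, z)`, with an arbitrary map `F` in place of the stacked
gradients, `L` in place of `L̄ ⊗ I`, and nested `L²` products so that triples carry the inner
product `⟪x, x'⟫ + ⟪λ, λ'⟫ + ⟪z, z'⟫`. -/
def saddleOperator (F : H → H) (L : H →ₗ[ℝ] H) (d : H) (S : WithLp 2 (H × WithLp 2 (H × H))) :
    WithLp 2 (H × WithLp 2 (H × H)) :=
  WithLp.toLp 2 (-F S.fst + S.snd.fst,
    WithLp.toLp 2 (d - S.fst - L (S.snd.fst + S.snd.snd), L S.snd.fst))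

theorem saddleOperator_sub_saddleOperator (F : H → H) (L : H →ₗ[ℝ] H) (d : H)
    (S T : WithLp 2 (H × WithLp 2 (H × H))) :
    saddleOperator F L d S - saddleOperator F L d T
      = WithLp.toLp 2 (-(F S.fst - F T.fst) + (S - T).snd.fst,
          WithLp.toLp 2 (-(S - T).fst - L ((S - T).snd.fst + (S - T).snd.snd),
            L (S - T).snd.fst)) := by
  simp only [saddleOperator, map_add, map_sub, ← WithLp.toLp_sub, Prod.mk_sub_mk,
    WithLp.sub_fst, WithLp.sub_snd]
  congr 3
  · abel
  · congr 1
    abel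

theorem inner_sub_saddleOperator_sub (F : H → H) {L : H →ₗ[ℝ] H} (hL : L.IsSymmetric) (d : H)
    (S T : WithLp 2 (H × WithLp 2 (H × H))) :
    ⟪S - T, saddleOperator F L d S - saddleOperator F L d T⟫
      = -⟪S.fst - T.fst, F S.fst - F T.fst⟫
        - ⟪S.snd.fst - T.snd.fst, L (S.snd.fst - T.snd.fst)⟫ := by
  rw [saddleOperator_sub_saddleOperator, ← WithLp.sub_fst, ← WithLp.sub_fst, ← WithLp.sub_snd]
  generalize S - T = D
  have hcross : ⟪D.snd.snd, L D.snd.fst⟫ = ⟪D.snd.fst, L D.snd.snd⟫ := by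
    rw [← hL, real_inner_comm]
  simp only [WithLp.prod_inner_apply, WithLp.ofLp_fst, WithLp.ofLp_snd, map_add, inner_add_right,
    inner_neg_right, inner_sub_right, hcross, real_inner_comm D.fst D.snd.fst]
  ring

theorem inner_sub_saddleOperator_le (F : H → H) {L : H →ₗ[ℝ] H} (hL : L.IsSymmetric) {d : H}
    {S T : WithLp 2 (H × WithLp 2 (H × H))}
    (hvar : ⟪T.snd.fst - F T.fst, S.fst - T.fst⟫ ≤ 0)
    (hlam : L (T.snd.fst + T.snd.snd) = d - T.fst) (hz : L T.snd.fst = 0) :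
    ⟪S - T, saddleOperator F L d S⟫
      ≤ -⟪S.fst - T.fst, F S.fst - F T.fst⟫
        - ⟪S.snd.fst - T.snd.fst, L (S.snd.fst - T.snd.fst)⟫ := by
  have hT : ⟪S - T, saddleOperator F L d T⟫ ≤ 0 := by
    simpa [saddleOperator, hlam, hz, real_inner_comm, neg_add_eq_sub] using hvar
  rw [← inner_sub_saddleOperator_sub F hL d, inner_sub_right]
  linarith

end SaddleOperator

theorem dissipativity_estimate_J_general {ι E : Type*} [Fintype ι] [NormedAddCommGroup E]
    [InnerProductSpace ℝ E] (F : ι → E → E) (Ω : ι → Set E) (d : ι → E)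
    {Lbar : Matrix ι ι ℝ} (hsym : Lbar.IsSymm) {xs lams zs : ι → E}
    (heq_nc : ∀ i, ∀ y ∈ Ω i, ⟪lams i - F i (xs i), y - xs i⟫ ≤ 0)
    (heq_lam : ∀ i, ∑ j, Lbar i j • (lams j + zs j) = d i - xs i)
    (heq_z : ∀ i, ∑ j, Lbar i j • lams j = 0)
    {x : ι → E} (lam z : ι → E) (hx_mem : ∀ i, x i ∈ Ω i) :
    ∑ i, (⟪x i - xs i, -F i (x i) + lam i⟫
        + ⟪lam i - lams i, d i - x i - ∑ j, Lbar i j • (lam j + z j)⟫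
        + ⟪z i - zs i, ∑ j, Lbar i j • lam j⟫)
      ≤ -∑ i, ⟪x i - xs i, F i (x i) - F i (xs i)⟫
        - ∑ i, ∑ j, Lbar i j * ⟪lam i - lams i, lam j - lams j⟫ := by
  let stack (u : ι → E) : PiLp 2 (fun _ : ι => E) := WithLp.toLp 2 u
  let triple (u v w : ι → E) := WithLp.toLp 2 (stack u, WithLp.toLp 2 (stack v, stack w))
  have hvar : ⟪stack lams - stack fun i => F i (xs i), stack x - stack xs⟫ ≤ 0 :=
    Finset.sum_nonpos fun i _ => heq_nc i (x i) (hx_mem i)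
  have hL : (kroneckerId Lbar : PiLp 2 (fun _ : ι => E) →ₗ[ℝ] _).IsSymmetric :=
    isSymmetric_kroneckerId ((Matrix.conjTranspose_eq_transpose_of_trivial Lbar).trans hsym)
  have estimate := inner_sub_saddleOperator_le (fun u => stack fun i => F i (u i)) hL
    (S := triple x lam z) (T := triple xs lams zs) hvar
    (d := stack d) (PiLp.ext heq_lam) (PiLp.ext heq_z)
  rw [inner_kroneckerId_right] at estimate
  simpa [stack, triple, saddleOperator, PiLp.inner_apply,
    Finset.sum_add_distrib, add_assoc] using estimate

/-- **Dissipativity estimate for the operator `J`** (proof of Lemma 1).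
If `S* = (X*,Λ*,Z*)` is an equilibrium point, then for every triple `S = (X,Λ,Z)` with
`xᵢ ∈ Ωᵢ`,
`⟨S - S*, J(S)⟩ ≤ -∑ᵢ ⟨xᵢ - x*ᵢ, ∇fᵢ(xᵢ) - ∇fᵢ(x*ᵢ)⟩ - ∑ᵢ∑ⱼ L̄ᵢⱼ ⟨λᵢ - λ*ᵢ, λⱼ - λ*ⱼ⟩`,
where `⟨S - S*, J(S)⟩` is written out blockwise. -/
theorem dissipativity_estimate_J
    (n m : ℕ) (hn : 0 < n)
    (f : Fin n → EuclideanSpace ℝ (Fin m) → ℝ)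
    (hdiff : ∀ i, Differentiable ℝ (f i))
    (Ω : Fin n → Set (EuclideanSpace ℝ (Fin m)))
    (hΩne : ∀ i, (Ω i).Nonempty) (hΩcl : ∀ i, IsClosed (Ω i))
    (hΩconv : ∀ i, Convex ℝ (Ω i))
    (d : Fin n → EuclideanSpace ℝ (Fin m))
    (Lbar : Matrix (Fin n) (Fin n) ℝ) (hsym : Lbar.IsSymm)
    -- the equilibrium point S* = (X*, Λ*, Z*)
    (xs lams zs : Fin n → EuclideanSpace ℝ (Fin m))
    (heq_mem : ∀ i, xs i ∈ Ω i)
    (heq_nc : ∀ i, ∀ y ∈ Ω i, ⟪lams i - gradient (f i) (xs i), y - xs i⟫ ≤ 0)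
    (heq_lam : ∀ i, ∑ j, Lbar i j • (lams j + zs j) = d i - xs i)
    (heq_z : ∀ i, ∑ j, Lbar i j • lams j = 0)
    -- an arbitrary triple S = (X, Λ, Z) with xᵢ ∈ Ωᵢ
    (x lam z : Fin n → EuclideanSpace ℝ (Fin m))
    (hx_mem : ∀ i, x i ∈ Ω i) :
    ∑ i, (⟪x i - xs i, -gradient (f i) (x i) + lam i⟫
        + ⟪lam i - lams i, d i - x i - ∑ j, Lbar i j • (lam j + z j)⟫
        + ⟪z i - zs i, ∑ j, Lbar i j • lam j⟫)
      ≤ -∑ i, ⟪x i - xs i, gradient (f i) (x i) - gradient (f i) (xs i)⟫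
        - ∑ i, ∑ j, Lbar i j * ⟪lam i - lams i, lam j - lams j⟫ := by
  exact dissipativity_estimate_J_general (fun i => gradient (f i)) Ω d hsym heq_nc heq_lam heq_z
    lam z hx_mem
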